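/- Let f : ℝ^{n_x} → ℝ and g : ℝ^{n_x̄} → ℝ with g convex and differentiable, and define the augmented Lagrangian L(x, x̄, z, y) = f(x) + g(x̄) + yᵀ(Ax + Bx̄ + z − b) + (ρ/2)‖Ax + Bx̄ + z − b‖² + λᵀz + (β/2)‖z‖² with ρ = 2β, β > 0. Fix (x, x̄, z, y) with λ + β·z + y = 0, and let x⁺ satisfy L(x⁺, x̄, z, y) ≤ L(x, x̄, z, y). Let x̄⁺ be a global minimizer of x̄' ↦ L(x⁺, x̄', z, y), let z⁺ = −(ρ/(ρ+β))·(Ax⁺ + Bx̄⁺ − b + y/ρ) − (1/(ρ+β))·λ, and let y⁺ = y + ρ·(Ax⁺ + Bx̄⁺ + z⁺ − b). Then L(x⁺, x̄⁺, z⁺, y⁺) ≤ L(x, x̄, z, y) − β·‖B(x̄⁺ − x̄)‖² − (β/2)·‖z⁺ − z‖². -/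

import Mathlib

open RealInnerProductSpace

/-!
Convexity of `g` makes the augmented Lagrangian strongly convex in `x̄` with respect to the
seminorm `‖B ·‖`, so the exact `x̄`-step gains `(ρ / 2) ‖B (x̄⁺ - x̄)‖²`. In `z` it is a quadratic
with Hessian `ρ + β`, so the exact `z`-step gains `((ρ + β) / 2) ‖z⁺ - z‖²`. The `y`-step loses
`ρ ‖r⁺‖²`, where `r⁺ = A x⁺ + B x̄⁺ + z⁺ - b`. Stationarity in `z` reads `λ + β z⁺ + y⁺ = 0`, the
same identity that the previous iterate satisfies; subtracting the two gives `ρ r⁺ = -β (z⁺ - z)`,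
so the loss is `(β² / ρ) ‖z⁺ - z‖²`. For `ρ = 2β` the net gain in the last two steps is
`β ‖z⁺ - z‖²`.
-/

open Set Filter Topology

section QuadraticGrowth

variable {V E : Type*} [AddCommGroup V] [Module ℝ V] [NormedAddCommGroup E] [InnerProductSpace ℝ E]

theorem norm_sq_convex_combination (u v : E) (t : ℝ) :
    ‖(1 - t) • u + t • v‖ ^ 2 =
      (1 - t) * ‖u‖ ^ 2 + t * ‖v‖ ^ 2 - t * (1 - t) * ‖u - v‖ ^ 2 := by
  simp only [norm_add_sq_real, norm_sub_sq_real, real_inner_smul_left, real_inner_smul_right,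
    norm_smul, mul_pow, Real.norm_eq_abs, sq_abs]
  ring

theorem add_le_of_forall_mem_Ioo_add_one_sub_mul_le {a c d : ℝ}
    (h : ∀ t ∈ Ioo (0 : ℝ) 1, a + (1 - t) * c ≤ d) : a + c ≤ d := by
  have hcont : Continuous fun t : ℝ ↦ a + (1 - t) * c := by fun_prop
  have hlim : Tendsto (fun t : ℝ ↦ a + (1 - t) * c) (𝓝[>] 0) (𝓝 (a + c)) := by
    simpa using (hcont.tendsto 0).mono_left nhdsWithin_le_nhds
  exact le_of_tendsto hlim (eventually_of_mem (Ioo_mem_nhdsGT one_pos) h)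

theorem add_norm_sq_map_sub_le_of_isMinOn {s : Set V} {φ : V → ℝ} {μ : ℝ} {B : V →ₗ[ℝ] E}
    (hφ : ConvexOn ℝ s fun v ↦ φ v - μ / 2 * ‖B v‖ ^ 2) {p q : V} (hp : p ∈ s) (hq : q ∈ s)
    (hmin : IsMinOn φ s p) : φ p + μ / 2 * ‖B (p - q)‖ ^ 2 ≤ φ q := by
  refine add_le_of_forall_mem_Ioo_add_one_sub_mul_le fun t ⟨ht₀, ht₁⟩ ↦ ?_
  have ht : 0 ≤ 1 - t := sub_nonneg.2 ht₁.le
  have hp_le : φ p ≤ φ ((1 - t) • p + t • q) :=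
    hmin (hφ.1 hp hq ht ht₀.le (sub_add_cancel 1 t))
  have hconv := hφ.2 hp hq ht ht₀.le (sub_add_cancel 1 t)
  simp only [map_add, map_smul, norm_sq_convex_combination, smul_eq_mul, ← map_sub] at hconv
  refine le_of_mul_le_mul_left ?_ ht₀
  linarith

end QuadraticGrowth

theorem slack_update_stationary {K E : Type*} [Field K] [AddCommGroup E] [Module K E]
    {ρ β : K} {c lam y zp : E} (hρ : ρ ≠ 0) (hρβ : ρ + β ≠ 0)
    (hzp : zp = -((ρ / (ρ + β)) • (c + ρ⁻¹ • y)) - (ρ + β)⁻¹ • lam) :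
    lam + β • zp + (y + ρ • (c + zp)) = 0 := by
  rw [hzp]
  match_scalars <;> field_simp <;> ring

/-- The augmented Lagrangian of the problem of minimizing `f x + g xbar` subject to
`A x + B xbar + z = b` and `z = 0`, with multiplier `y` and penalty `ρ` for the first constraint and
multiplier `lam` and penalty `β` for the second. The maps `A` and `B` need not be linear. -/
noncomputable def augmentedLagrangian {X V E : Type*} [NormedAddCommGroup E] [InnerProductSpace ℝ E]
    (f : X → ℝ) (g : V → ℝ) (A : X → E) (B : V → E) (b lam : E) (ρ β : ℝ)
    (x : X) (xbar : V) (z y : E) : ℝ :=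
  f x + g xbar + ⟪y, A x + B xbar + z - b⟫ +
    (ρ / 2) * ‖A x + B xbar + z - b‖ ^ 2 + ⟪lam, z⟫ + (β / 2) * ‖z‖ ^ 2

namespace augmentedLagrangian

variable {X V E : Type*} [NormedAddCommGroup E] [InnerProductSpace ℝ E]
  {f : X → ℝ} {g : V → ℝ} {A : X → E} {b lam : E} {ρ β : ℝ} {x : X} {xbar : V} {z zp y yp : E}

section ConvexBlock

variable [AddCommGroup V] [Module ℝ V] {B : V →ₗ[ℝ] E}

theorem convexOn_sub_norm_sq (hg : ConvexOn ℝ univ g) :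
    ConvexOn ℝ univ fun xbar ↦
      augmentedLagrangian f g A B b lam ρ β x xbar z y - ρ / 2 * ‖B xbar‖ ^ 2 := by
  set c := A x + z - b with hc
  have hlinear : ConvexOn ℝ univ fun xbar ↦ ⟪y + ρ • c, B xbar⟫ :=
    ((innerₛₗ ℝ (y + ρ • c)).comp B).convexOn convex_univ
  refine ((hg.add hlinear).add_const
    (f x + ⟪y, c⟫ + ρ / 2 * ‖c‖ ^ 2 + ⟪lam, z⟫ + β / 2 * ‖z‖ ^ 2)).congr fun xbar _ ↦ ?_
  have hresidual : A x + B xbar + z - b = c + B xbar := by rw [hc]; abel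
  simp only [augmentedLagrangian, hresidual, Pi.add_apply, norm_add_sq_real, inner_add_left,
    inner_add_right, real_inner_smul_left]
  ring

theorem add_norm_sq_le_of_forall_le (hg : ConvexOn ℝ univ g) {xbarp : V}
    (hmin : ∀ xbar', augmentedLagrangian f g A B b lam ρ β x xbarp z y ≤
      augmentedLagrangian f g A B b lam ρ β x xbar' z y) :
    augmentedLagrangian f g A B b lam ρ β x xbarp z y + ρ / 2 * ‖B (xbarp - xbar)‖ ^ 2 ≤
      augmentedLagrangian f g A B b lam ρ β x xbar z y :=
  add_norm_sq_map_sub_le_of_isMinOn (convexOn_sub_norm_sq hg) (mem_univ _) (mem_univ _)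
    fun xbar' _ ↦ hmin xbar'

end ConvexBlock

section SlackAndDual

variable {B : V → E}

theorem eq_sub_norm_sq_of_slack_stationary
    (hzp : lam + β • zp + (y + ρ • (A x + B xbar + zp - b)) = 0) :
    augmentedLagrangian f g A B b lam ρ β x xbar zp y =
      augmentedLagrangian f g A B b lam ρ β x xbar z y - (ρ + β) / 2 * ‖zp - z‖ ^ 2 := by
  set r := A x + B xbar + zp - b with hr
  obtain ⟨w, rfl⟩ : ∃ w, z = zp - w := ⟨zp - z, (sub_sub_cancel zp z).symm⟩
  have hresidual : A x + B xbar + (zp - w) - b = r - w := by rw [hr]; abel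
  have hstationary : ⟪lam, w⟫ + β * ⟪zp, w⟫ + (⟪y, w⟫ + ρ * ⟪r, w⟫) = 0 := by
    simpa only [inner_add_left, real_inner_smul_left, inner_zero_left]
      using congrArg (fun v ↦ ⟪v, w⟫) hzp
  simp only [augmentedLagrangian, hresidual, ← hr, sub_sub_cancel, norm_sub_sq_real,
    inner_sub_right]
  linarith

theorem multiplier_update_eq :
    augmentedLagrangian f g A B b lam ρ β x xbar z (y + ρ • (A x + B xbar + z - b)) =
      augmentedLagrangian f g A B b lam ρ β x xbar z y + ρ * ‖A x + B xbar + z - b‖ ^ 2 := by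
  simp only [augmentedLagrangian, inner_add_left, real_inner_smul_left, real_inner_self_eq_norm_sq]
  ring

theorem slack_multiplier_update_eq (hρ : ρ ≠ 0) (hρβ : ρ + β ≠ 0) (hdual : lam + β • z + y = 0)
    (hzp : zp = -((ρ / (ρ + β)) • (A x + B xbar - b + ρ⁻¹ • y)) - (ρ + β)⁻¹ • lam)
    (hyp : yp = y + ρ • (A x + B xbar + zp - b)) :
    augmentedLagrangian f g A B b lam ρ β x xbar zp yp =
      augmentedLagrangian f g A B b lam ρ β x xbar z y -
        ((ρ + β) / 2 - β ^ 2 / ρ) * ‖zp - z‖ ^ 2 := by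
  have hstationary : lam + β • zp + (y + ρ • (A x + B xbar + zp - b)) = 0 := by
    rw [← sub_add_eq_add_sub]
    exact slack_update_stationary hρ hρβ hzp
  have hresidual : A x + B xbar + zp - b = -((β / ρ) • (zp - z)) := by
    have hscaled : ρ • (A x + B xbar + zp - b) = -(β • (zp - z)) := by
      linear_combination (norm := module) hstationary - hdual
    rw [← inv_smul_smul₀ hρ (A x + B xbar + zp - b), hscaled, smul_neg, smul_smul,
      inv_mul_eq_div]
  have hascent : ρ * ‖A x + B xbar + zp - b‖ ^ 2 = β ^ 2 / ρ * ‖zp - z‖ ^ 2 := by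
    rw [hresidual, norm_neg, norm_smul, mul_pow, Real.norm_eq_abs, sq_abs]
    field_simp
  rw [hyp, multiplier_update_eq, hascent, eq_sub_norm_sq_of_slack_stationary hstationary]
  ring

end SlackAndDual

end augmentedLagrangian

theorem inner_iteration_decrease_general {X V E : Type*} [AddCommGroup V] [Module ℝ V]
    [NormedAddCommGroup E] [InnerProductSpace ℝ E] {f : X → ℝ} {g : V → ℝ}
    (hg : ConvexOn ℝ univ g) {A : X → E} {B : V →ₗ[ℝ] E} {b lam : E} {ρ β : ℝ}
    (hρ : ρ ≠ 0) (hρβ : ρ + β ≠ 0) {x xp : X} {xbar xbarp : V} {z zp y yp : E}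
    (hdual : lam + β • z + y = 0)
    (hx : augmentedLagrangian f g A B b lam ρ β xp xbar z y ≤
      augmentedLagrangian f g A B b lam ρ β x xbar z y)
    (hxbar : ∀ xbar', augmentedLagrangian f g A B b lam ρ β xp xbarp z y ≤
      augmentedLagrangian f g A B b lam ρ β xp xbar' z y)
    (hzp : zp = -((ρ / (ρ + β)) • (A xp + B xbarp - b + ρ⁻¹ • y)) - (ρ + β)⁻¹ • lam)
    (hyp : yp = y + ρ • (A xp + B xbarp + zp - b)) :
    augmentedLagrangian f g A B b lam ρ β xp xbarp zp yp ≤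
      augmentedLagrangian f g A B b lam ρ β x xbar z y - ρ / 2 * ‖B (xbarp - xbar)‖ ^ 2 -
        ((ρ + β) / 2 - β ^ 2 / ρ) * ‖zp - z‖ ^ 2 := by
  rw [augmentedLagrangian.slack_multiplier_update_eq hρ hρβ hdual hzp hyp]
  gcongr
  exact le_sub_right_of_add_le
    ((augmentedLagrangian.add_norm_sq_le_of_forall_le hg hxbar).trans hx)

/-- One full inner ADMM iteration (inexact x-update that does not increase
`L`, exact x̄-update, closed-form z-update, dual y-update), with `ρ = 2β` and the
dual-slack identity `λ + βz + y = 0`, decreases the augmented Lagrangian by at least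
`β‖B(x̄⁺ − x̄)‖² + (β/2)‖z⁺ − z‖²`. -/
theorem inner_iteration_decrease {nx nxb m : ℕ}
    (f : EuclideanSpace ℝ (Fin nx) → ℝ) (g : EuclideanSpace ℝ (Fin nxb) → ℝ)
    (hgconv : ConvexOn ℝ Set.univ g) (hgdiff : Differentiable ℝ g)
    (A : EuclideanSpace ℝ (Fin nx) →L[ℝ] EuclideanSpace ℝ (Fin m))
    (B : EuclideanSpace ℝ (Fin nxb) →L[ℝ] EuclideanSpace ℝ (Fin m))
    (b : EuclideanSpace ℝ (Fin m)) (lam : EuclideanSpace ℝ (Fin m))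
    (ρ β : ℝ) (hβ : 0 < β) (hρβ : ρ = 2 * β)
    (L : EuclideanSpace ℝ (Fin nx) → EuclideanSpace ℝ (Fin nxb) →
      EuclideanSpace ℝ (Fin m) → EuclideanSpace ℝ (Fin m) → ℝ)
    (hL : ∀ x xbar z y, L x xbar z y =
      f x + g xbar + ⟪y, A x + B xbar + z - b⟫ +
        (ρ / 2) * ‖A x + B xbar + z - b‖ ^ 2 + ⟪lam, z⟫ + (β / 2) * ‖z‖ ^ 2)
    (x : EuclideanSpace ℝ (Fin nx)) (xbar : EuclideanSpace ℝ (Fin nxb))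
    (z y : EuclideanSpace ℝ (Fin m))
    (hdual : lam + β • z + y = 0)
    (xp : EuclideanSpace ℝ (Fin nx))
    (hx : L xp xbar z y ≤ L x xbar z y)
    (xbarp : EuclideanSpace ℝ (Fin nxb))
    (hxbar : ∀ xbar', L xp xbarp z y ≤ L xp xbar' z y)
    (zp : EuclideanSpace ℝ (Fin m))
    (hzp : zp = -((ρ / (ρ + β)) • (A xp + B xbarp - b + ρ⁻¹ • y)) - (ρ + β)⁻¹ • lam)
    (yp : EuclideanSpace ℝ (Fin m))
    (hyp : yp = y + ρ • (A xp + B xbarp + zp - b)) :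
    L xp xbarp zp yp ≤
      L x xbar z y - β * ‖B (xbarp - xbar)‖ ^ 2 - (β / 2) * ‖zp - z‖ ^ 2 := by
  have hρ : 0 < ρ := by linarith
  have hcoeff : (ρ + β) / 2 - β ^ 2 / ρ = β := by
    rw [hρβ]
    field_simp
    ring
  have hgain : 0 ≤ β / 2 * ‖zp - z‖ ^ 2 := by positivity
  obtain rfl : L = augmentedLagrangian f g A B.toLinearMap b lam ρ β := by
    funext x xbar z y
    exact hL x xbar z y
  have hdecrease :=
    inner_iteration_decrease_general hgconv hρ.ne' (add_pos hρ hβ).ne' hdual hx hxbar hzp hyp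
  rw [hcoeff, show ρ / 2 = β by linarith] at hdecrease
  simp only [ContinuousLinearMap.coe_coe] at hdecrease ⊢
  linarith
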